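/- If the edge-probability function satisfies p(n) ≤ 1.02·ln n / n, then with high probability a graph G sampled from G(n,p) has minimum degree δ(G) ≤ (ln n)/300; consequently, for p in this range w.h.p. δ(G) − 2 ≤ (np/100)·(1/3 − ε) for some fixed ε > 0 (e.g. ε = 1/160). -/

import Mathlib

open Filter Finset SimpleGraph
open scoped Classical

/-- The probability weight of a particular graph `G` on `[n]` under `G(n,p)`. -/
noncomputable def gnpWeight (n : ℕ) (p : ℝ) (G : SimpleGraph (Fin n)) : ℝ :=
  p ^ G.edgeFinset.card * (1 - p) ^ (n.choose 2 - G.edgeFinset.card)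

/-- The probability that a random graph `G ~ G(n,p)` satisfies the predicate `A`. -/
noncomputable def gnpProb (n : ℕ) (p : ℝ) (A : SimpleGraph (Fin n) → Prop) : ℝ :=
  ∑ G : SimpleGraph (Fin n), if A G then gnpWeight n p G else 0

/-- A sequence of graph properties holds with high probability in `G(n, p n)`. -/
def WHP (p : ℕ → ℝ) (A : ∀ n : ℕ, SimpleGraph (Fin n) → Prop) : Prop :=
  Tendsto (fun n => gnpProb n (p n) (A n)) atTop (nhds 1)

/-- Number of edges of a graph. -/
noncomputable def edgeCount {V : Type*} [Fintype V] (G : SimpleGraph V) : ℕ :=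
  G.edgeFinset.card

/-- Number of edges with both endpoints in `U`. -/
noncomputable def eIn {V : Type*} [Fintype V] (G : SimpleGraph V) (U : Finset V) : ℕ :=
  (G.edgeFinset.filter (fun e => ∀ v ∈ e, v ∈ U)).card

/-- Number of edges with one endpoint in `U` and the other in `Z` (for disjoint `U`, `Z`). -/
noncomputable def eBetween {V : Type*} [Fintype V] (G : SimpleGraph V) (U Z : Finset V) : ℕ :=
  ((U ×ˢ Z).filter (fun q => G.Adj q.1 q.2)).card

/-- External neighbourhood of a vertex set. -/
noncomputable def extNbhd {V : Type*} [Fintype V] (G : SimpleGraph V) (U : Finset V) : Finset V :=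
  Finset.univ.filter (fun v => v ∉ U ∧ ∃ u ∈ U, G.Adj u v)

/-- `G` is an `(R, f)`-expander: every set `U` with `|U| ≤ R` satisfies `|N(U)| ≥ f(|U|)·|U|`. -/
def IsExpander {V : Type*} [Fintype V] (G : SimpleGraph V) (R : ℝ) (f : ℕ → ℝ) : Prop :=
  ∀ U : Finset V, U.Nonempty → (U.card : ℝ) ≤ R →
    f U.card * U.card ≤ ((extNbhd G U).card : ℝ)

/-- The expansion function `f_β` on `{1, …, ⌊β n₁⌋}`. -/
noncomputable def fBeta (β : ℝ) (n1 : ℕ) (t : ℕ) : ℝ :=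
  if t = Nat.floor (β * n1) then 2 * (1 + 39 * β) / (3 * β)
  else if (t : ℝ) < (n1 : ℝ) ^ (0.1 : ℝ) then Real.log n1 ^ (0.8 : ℝ)
  else 11

/-- `G₁` is `(n₁, d, β)`-quasi-random. -/
def QuasiRandom {V : Type*} [Fintype V] (G1 : SimpleGraph V) (n1 : ℕ) (d β : ℝ) : Prop :=
  (∀ v : V, d / 150 ≤ (G1.degree v : ℝ)) ∧
  (∀ U : Finset V, (U.card : ℝ) < (n1 : ℝ) ^ (0.11 : ℝ) * Real.log n1 →
    (eIn G1 U : ℝ) ≤ d ^ (0.13 : ℝ) * U.card) ∧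
  (∀ U : Finset V, (U.card : ℝ) < 12 * β * n1 →
    (eIn G1 U : ℝ) ≤ 50 * β * d * U.card) ∧
  (∀ U Z : Finset V, Disjoint U Z → U.card = Nat.floor (β * n1) →
    Z.card = Nat.floor ((1 / 3 - 27 * β) * n1) →
    (n1 : ℝ) * Real.log (Real.log n1) ≤ (eBetween G1 U Z : ℝ))

/-- Longest path length in `G`. -/
noncomputable def longestPath {V : Type*} [Fintype V] (G : SimpleGraph V) : ℕ :=
  sSup {l : ℕ | ∃ (u v : V) (q : G.Walk u v), q.IsPath ∧ q.length = l}

/-- `{u, v}` is a booster with respect to `Γ`. -/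
def IsBooster {V : Type*} [Fintype V] (Γ : SimpleGraph V) (u v : V) : Prop :=
  u ≠ v ∧ ¬ Γ.Adj u v ∧
    ((Γ ⊔ fromEdgeSet {s(u, v)}).IsHamiltonian ∨
      longestPath Γ < longestPath (Γ ⊔ fromEdgeSet {s(u, v)}))

/-- The booster set `B_Γ(v)`. -/
noncomputable def boosterSet {V : Type*} [Fintype V] (Γ : SimpleGraph V) (v : V) : Finset V :=
  Finset.univ.filter (fun w => IsBooster Γ v w)

/-- Membership in the family `𝓛(n, β)` with witnessing partition `V = V₁ ∪ D`. -/
def InFamilyL (n : ℕ) (β : ℝ) (G : SimpleGraph (Fin n)) (V1 D : Finset (Fin n)) : Prop :=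
  Disjoint V1 D ∧ V1 ∪ D = Finset.univ ∧
  ((D.card : ℝ) ≤ (n : ℝ) ^ (0.09 : ℝ)) ∧
  (∀ u ∈ D, 2 ≤ (G.neighborFinset u ∩ V1).card) ∧
  (∀ u ∈ D, ∀ v ∈ D, ∀ q : G.Walk u v, q.IsPath → 0 < q.length →
    2 * Real.log n / (3 * Real.log (Real.log n)) < (q.length : ℝ)) ∧
  (∀ u ∈ D, ∀ q : G.Walk u u, q.IsCycle →
    2 * Real.log n / (3 * Real.log (Real.log n)) < (q.length : ℝ)) ∧
  IsExpander (G.induce (V1 : Set (Fin n))) (β * V1.card) (fBeta β V1.card)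

noncomputable def bW {α : Type*} (p : ℝ) (A : Finset α) (f : Finset α → ℝ) : ℝ :=
  ∑ S ∈ A.powerset, p ^ S.card * (1 - p) ^ (A.card - S.card) * f S

lemma bW_insert {α : Type*} [DecidableEq α] (p : ℝ) (A : Finset α) (a : α) (ha : a ∉ A)
    (f : Finset α → ℝ) :
    bW p (insert a A) f = (1 - p) * bW p A f + p * bW p A (fun S => f (insert a S)) := by
  unfold bW
  rw [Finset.sum_powerset_insert ha, Finset.mul_sum, Finset.mul_sum]
  congr 1
  · refine Finset.sum_congr rfl fun S hS => ?_
    have h1 := Finset.card_le_card (Finset.mem_powerset.1 hS)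
    rw [Finset.card_insert_of_notMem ha, Nat.sub_add_comm h1, pow_succ]
    ring
  · refine Finset.sum_congr rfl fun S hS => ?_
    have h2 : a ∉ S := fun h => ha (Finset.mem_powerset.1 hS h)
    rw [Finset.card_insert_of_notMem ha, Finset.card_insert_of_notMem h2, pow_succ,
      Nat.add_sub_add_right]
    ring

lemma bW_add {α : Type*} (p c d : ℝ) (A : Finset α) (f g : Finset α → ℝ) :
    bW p A (fun S => c * f S + d * g S) = c * bW p A f + d * bW p A g := by
  unfold bW
  rw [Finset.mul_sum, Finset.mul_sum, ← Finset.sum_add_distrib]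
  exact Finset.sum_congr rfl fun S _ => by ring

lemma bW_union {α : Type*} [DecidableEq α] (p : ℝ) (A B : Finset α) (h : Disjoint A B)
    (f : Finset α → ℝ) :
    bW p (A ∪ B) f = bW p A (fun S => bW p B (fun T => f (S ∪ T))) := by
  induction A using Finset.induction_on generalizing f with
  | empty => simp [bW]
  | insert a A ha ih =>
    rw [Finset.disjoint_insert_left] at h
    rw [Finset.insert_union, bW_insert p _ a (by simp [ha, h.1]), bW_insert p _ a ha,
      ih h.2, ih h.2]
    simp only [Finset.insert_union]

lemma bW_card {α : Type*} (p : ℝ) (A : Finset α) (f : ℕ → ℝ) :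
    bW p A (fun S => f S.card) =
      ∑ j ∈ Finset.range (A.card + 1), (A.card.choose j : ℝ) * (p ^ j * (1 - p) ^ (A.card - j) * f j) := by
  unfold bW
  rw [Finset.sum_powerset_apply_card (fun j => p ^ j * (1 - p) ^ (A.card - j) * f j)]
  simp

lemma bW_one {α : Type*} (p : ℝ) (A : Finset α) : bW p A (fun _ => 1) = 1 := by
  rw [bW_card p A (fun _ => 1)]
  have := add_pow p (1 - p) A.card
  simp only [add_sub_cancel, one_pow] at this
  conv_rhs => rw [this]
  exact Finset.sum_congr rfl fun j _ => by ring

lemma bW_const {α : Type*} (p c : ℝ) (A : Finset α) : bW p A (fun _ => c) = c := by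
  have := bW_add p c 0 A (fun _ => 1) (fun _ => 1)
  simpa [bW_one] using this

lemma bW_mono {α : Type*} (p : ℝ) (h0 : 0 ≤ p) (h1 : p ≤ 1) (A : Finset α)
    (f g : Finset α → ℝ) (h : ∀ S ⊆ A, f S ≤ g S) : bW p A f ≤ bW p A g := by
  unfold bW
  refine Finset.sum_le_sum fun S hS => mul_le_mul_of_nonneg_left (h S (Finset.mem_powerset.1 hS)) ?_
  have : 0 ≤ 1 - p := by linarith
  positivity

lemma bW_inter {α : Type*} [DecidableEq α] (p : ℝ) (E A : Finset α) (h : A ⊆ E)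
    (f : Finset α → ℝ) : bW p E (fun S => f (S ∩ A)) = bW p A f := by
  have hE : A ∪ (E \ A) = E := Finset.union_sdiff_of_subset h
  conv_lhs => rw [← hE]
  rw [bW_union p _ _ Finset.disjoint_sdiff]
  simp only [bW]
  refine Finset.sum_congr rfl fun S hS => ?_
  congr 1
  have hc := bW_const p (f S) (E \ A)
  simp only [bW] at hc
  refine Eq.trans (Finset.sum_congr rfl fun T hT => ?_) hc
  congr 2
  rw [Finset.mem_powerset] at hS hT
  ext x
  have h1 := @hS x
  have h2 := @hT x
  simp only [Finset.mem_sdiff] at h2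
  simp only [Finset.mem_inter, Finset.mem_union]
  tauto

lemma bW_inter2 {α : Type*} [DecidableEq α] (p : ℝ) (E A B : Finset α) (hA : A ⊆ E) (hB : B ⊆ E)
    (hd : Disjoint A B) (f g : Finset α → ℝ) :
    bW p E (fun S => f (S ∩ A) * g (S ∩ B)) = bW p A f * bW p B g := by
  have key := bW_inter p E (A ∪ B) (Finset.union_subset hA hB) (fun S => f (S ∩ A) * g (S ∩ B))
  have e1 : ∀ S : Finset α, S ∩ (A ∪ B) ∩ A = S ∩ A := by intro S; ext; simp only [Finset.mem_inter, Finset.mem_union]; tauto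
  have e2 : ∀ S : Finset α, S ∩ (A ∪ B) ∩ B = S ∩ B := by intro S; ext; simp only [Finset.mem_inter, Finset.mem_union]; tauto
  simp only [e1, e2] at key
  rw [key, bW_union p _ _ hd]
  have : ∀ S ∈ A.powerset, bW p B (fun T => f ((S ∪ T) ∩ A) * g ((S ∪ T) ∩ B)) = f S * bW p B g := by
    intro S hS
    simp only [bW]
    rw [Finset.mul_sum]
    refine Finset.sum_congr rfl fun T hT => ?_
    rw [Finset.mem_powerset] at hS hT
    have h1 : (S ∪ T) ∩ A = S := by
      rw [Finset.union_inter_distrib_right, Finset.inter_eq_left.2 hS,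
        Finset.disjoint_iff_inter_eq_empty.1 (hd.symm.mono_left hT), Finset.union_empty]
    have h2 : (S ∪ T) ∩ B = T := by
      rw [Finset.union_inter_distrib_right, Finset.inter_eq_left.2 hT,
        Finset.disjoint_iff_inter_eq_empty.1 (hd.mono_left hS), Finset.empty_union]
    rw [h1, h2]; ring
  rw [show bW p A f * bW p B g = ∑ S ∈ A.powerset, p ^ S.card * (1 - p) ^ (A.card - S.card) *
    (f S * bW p B g) by
      conv_lhs => rw [bW, Finset.sum_mul]
      exact Finset.sum_congr rfl fun S _ => by ring]
  conv_lhs => rw [bW]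
  exact Finset.sum_congr rfl fun S hS => by rw [this S hS]

/-- Binomial lower tail. -/
noncomputable def bTail (p : ℝ) (m k : ℕ) : ℝ :=
  ∑ j ∈ Finset.range (m + 1), (m.choose j : ℝ) * (p ^ j * (1 - p) ^ (m - j) * if j ≤ k then 1 else 0)

lemma bW_tail {α : Type*} (p : ℝ) (A : Finset α) (k : ℕ) :
    bW p A (fun S => if S.card ≤ k then 1 else 0) = bTail p A.card k :=
  bW_card p A (fun j => if j ≤ k then 1 else 0)

lemma bTail_succ (p : ℝ) (h0 : 0 ≤ p) (h1 : p ≤ 1) (m k : ℕ) :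
    (1 - p) * bTail p m k ≤ bTail p (m + 1) k := by
  have h2 : 0 ≤ 1 - p := by linarith
  unfold bTail
  rw [Finset.mul_sum, Finset.sum_range_succ _ (m + 1)]
  have : ∀ j, 0 ≤ (((m+1).choose j : ℕ) : ℝ) * (p ^ j * (1 - p) ^ (m + 1 - j) * if j ≤ k then 1 else 0) := by
    intro j; split_ifs <;> positivity
  refine le_trans (Finset.sum_le_sum fun j hj => ?_) (le_add_of_nonneg_right (this _))
  have hj' : j ≤ m := by simpa [Nat.lt_succ_iff] using hj
  have hc : (m.choose j : ℝ) ≤ ((m + 1).choose j : ℝ) := by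
    exact_mod_cast Nat.choose_le_choose j (Nat.le_succ m)
  rw [Nat.sub_add_comm hj', pow_succ]
  split_ifs
  · have : 0 ≤ (1 - p) * (p ^ j * (1 - p) ^ (m - j)) := by positivity
    nlinarith [mul_le_mul_of_nonneg_right hc this]
  · simp

lemma bTail_ge (p : ℝ) (h0 : 0 ≤ p) (h1 : p ≤ 1) (m k : ℕ) (hk : k ≤ m) :
    (m.choose k : ℝ) * (p ^ k * (1 - p) ^ (m - k)) ≤ bTail p m k := by
  have h2 : 0 ≤ 1 - p := by linarith
  unfold bTail
  have := Finset.single_le_sum (s := Finset.range (m + 1)) (f := fun j => (m.choose j : ℝ) * (p ^ j * (1 - p) ^ (m - j) * if j ≤ k then 1 else 0)) (fun j _ => by split_ifs <;> positivity) (a := k) (by simp; omega)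
  simpa using this

/-! ### graphs -/

noncomputable def gE (n : ℕ) : Finset (Sym2 (Fin n)) := (⊤ : SimpleGraph (Fin n)).edgeFinset

lemma gE_card (n : ℕ) : (gE n).card = n.choose 2 := by
  unfold gE
  rw [SimpleGraph.card_edgeFinset_top_eq_card_choose_two, Fintype.card_fin]

lemma sum_graph (n : ℕ) (p : ℝ) (f : Finset (Sym2 (Fin n)) → ℝ) :
    ∑ G : SimpleGraph (Fin n), gnpWeight n p G * f G.edgeFinset = bW p (gE n) f := by
  unfold bW
  refine Finset.sum_bij' (fun G _ => G.edgeFinset) (fun S _ => SimpleGraph.fromEdgeSet (S : Set _))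
    ?_ ?_ ?_ ?_ ?_
  · intro G _
    simp only [Finset.mem_powerset, gE]
    exact SimpleGraph.edgeFinset_mono le_top
  · intro S _; simp
  · intro G _
    simp
  · intro S hS
    have : ∀ e ∈ S, ¬ e.IsDiag := by
      intro e he
      have := Finset.mem_powerset.1 hS he
      simpa [gE] using this
    ext e
    simp only [SimpleGraph.mem_edgeFinset, SimpleGraph.edgeSet_fromEdgeSet]
    simp
    intro he
    exact this e he
  · intro G _
    simp [gnpWeight, gE_card]

noncomputable def gInc (n : ℕ) (v : Fin n) : Finset (Sym2 (Fin n)) := (gE n).filter (fun e => v ∈ e)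

lemma degree_eq (n : ℕ) (G : SimpleGraph (Fin n)) (v : Fin n) :
    G.degree v = (G.edgeFinset ∩ gInc n v).card := by
  rw [← SimpleGraph.card_incidenceFinset_eq_degree, SimpleGraph.incidenceFinset_eq_filter]
  congr 1
  have : G.edgeFinset ⊆ gE n := SimpleGraph.edgeFinset_mono le_top
  ext e
  have := @this e
  simp only [gInc, Finset.mem_inter, Finset.mem_filter]
  tauto

lemma gInc_card (n : ℕ) (v : Fin n) : (gInc n v).card = n - 1 := by
  have h1 := degree_eq n ⊤ v
  have h3 := SimpleGraph.complete_graph_degree v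
  rw [Fintype.card_fin] at h3
  rw [← h3]
  refine Eq.trans ?_ (h1.symm.trans ?_)
  · congr 1
    ext e
    simp [gInc, gE]
  · congr!

lemma pr_deg (n k : ℕ) (p : ℝ) (v : Fin n) :
    ∑ G : SimpleGraph (Fin n), gnpWeight n p G * (if G.degree v ≤ k then 1 else 0)
      = bTail p (n - 1) k := by
  have h := sum_graph n p (fun S => if (S ∩ gInc n v).card ≤ k then 1 else 0)
  rw [bW_inter p (gE n) (gInc n v) (Finset.filter_subset _ _) (fun S => if S.card ≤ k then 1 else 0),
    bW_tail, gInc_card] at h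
  rw [← h]
  exact Finset.sum_congr rfl fun G _ => by rw [degree_eq]

lemma pr_deg2 (n k : ℕ) (p : ℝ) (h0 : 0 ≤ p) (h1 : p ≤ 1) (u v : Fin n) (huv : u ≠ v) :
    ∑ G : SimpleGraph (Fin n), gnpWeight n p G *
      ((if G.degree u ≤ k then 1 else 0) * (if G.degree v ≤ k then 1 else 0))
      ≤ bTail p (n - 2) k ^ 2 := by
  set A := (gInc n u).erase s(u, v) with hA
  set B := (gInc n v).erase s(u, v) with hB
  have hu : s(u, v) ∈ gInc n u := by simp [gInc, gE, huv]
  have hv : s(u, v) ∈ gInc n v := by simp [gInc, gE, huv]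
  have cA : A.card = n - 2 := by rw [hA, Finset.card_erase_of_mem hu, gInc_card]; omega
  have cB : B.card = n - 2 := by rw [hB, Finset.card_erase_of_mem hv, gInc_card]; omega
  have hd : Disjoint A B := by
    rw [Finset.disjoint_left]
    intro e he he'
    simp only [hA, hB, Finset.mem_erase, gInc, Finset.mem_filter] at he he'
    exact he.1 ((Sym2.mem_and_mem_iff huv).1 ⟨he.2.2, he'.2.2⟩)
  have sA : A ⊆ gE n := (Finset.erase_subset _ _).trans (Finset.filter_subset _ _)
  have sB : B ⊆ gE n := (Finset.erase_subset _ _).trans (Finset.filter_subset _ _)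
  have h := bW_inter2 p (gE n) A B sA sB hd (fun S => if S.card ≤ k then 1 else 0)
    (fun S => if S.card ≤ k then 1 else 0)
  rw [bW_tail, bW_tail, cA, cB] at h
  rw [pow_two, ← h]
  simp only [degree_eq]
  rw [sum_graph n p (fun S => (if (S ∩ gInc n u).card ≤ k then 1 else 0) * (if (S ∩ gInc n v).card ≤ k then 1 else 0))]
  refine bW_mono p h0 h1 _ _ _ fun S _ => ?_
  have i1 : (S ∩ A).card ≤ (S ∩ gInc n u).card :=
    Finset.card_le_card (Finset.inter_subset_inter_left (Finset.erase_subset _ _))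
  have i2 : (S ∩ B).card ≤ (S ∩ gInc n v).card :=
    Finset.card_le_card (Finset.inter_subset_inter_left (Finset.erase_subset _ _))
  split_ifs <;> first | (exfalso; omega) | norm_num

lemma weight_sum (n : ℕ) (p : ℝ) : ∑ G : SimpleGraph (Fin n), gnpWeight n p G = 1 := by
  have := sum_graph n p (fun _ => 1)
  simpa [bW_one] using this

lemma weight_nonneg (n : ℕ) (p : ℝ) (h0 : 0 ≤ p) (h1 : p ≤ 1) (G : SimpleGraph (Fin n)) :
    0 ≤ gnpWeight n p G := by
  have : 0 ≤ 1 - p := by linarith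
  unfold gnpWeight; positivity

lemma prob_le_one (n : ℕ) (p : ℝ) (h0 : 0 ≤ p) (h1 : p ≤ 1) (A : SimpleGraph (Fin n) → Prop) :
    gnpProb n p A ≤ 1 := by
  rw [← weight_sum n p]
  unfold gnpProb
  refine Finset.sum_le_sum fun G _ => ?_
  split_ifs
  · exact le_rfl
  · exact weight_nonneg n p h0 h1 G

/-- Second moment bound. -/
lemma second_moment (n k : ℕ) (p : ℝ) (h0 : 0 ≤ p) (h1 : p ≤ 1)
    (A : SimpleGraph (Fin n) → Prop) (hA : ∀ G v, G.degree v ≤ k → A G) :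
    (1 - gnpProb n p A) * (n * bTail p (n - 1) k) ^ 2 ≤
      n * bTail p (n - 1) k + n ^ 2 * bTail p (n - 2) k ^ 2 - (n * bTail p (n - 1) k) ^ 2 := by
  set r := bTail p (n - 1) k
  set q := bTail p (n - 2) k
  set X : SimpleGraph (Fin n) → ℝ := fun G => ∑ v, if G.degree v ≤ k then 1 else 0 with hX
  have hEX : ∑ G, gnpWeight n p G * X G = n * r := by
    simp only [hX, Finset.mul_sum]
    rw [Finset.sum_comm]
    have : ∀ v : Fin n, ∑ G : SimpleGraph (Fin n), gnpWeight n p G * (if G.degree v ≤ k then 1 else 0) = r := fun v => pr_deg n k p v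
    rw [Finset.sum_congr rfl fun v _ => this v]
    simp
  have hEX2 : ∑ G, gnpWeight n p G * (X G) ^ 2 ≤ n * r + n ^ 2 * q ^ 2 := by
    have e : ∀ G, gnpWeight n p G * (X G) ^ 2 = ∑ u, ∑ v, gnpWeight n p G *
      ((if G.degree u ≤ k then 1 else 0) * (if G.degree v ≤ k then 1 else 0)) := by
      intro G
      rw [pow_two, hX, Finset.sum_mul_sum, Finset.mul_sum]
      exact Finset.sum_congr rfl fun u _ => by rw [Finset.mul_sum]
    rw [Finset.sum_congr rfl fun G _ => e G, Finset.sum_comm]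
    have hu : ∀ u : Fin n, ∑ G : SimpleGraph (Fin n), ∑ v, gnpWeight n p G *
      ((if G.degree u ≤ k then 1 else 0) * (if G.degree v ≤ k then 1 else 0)) ≤ r + n * q ^ 2 := by
      intro u
      rw [Finset.sum_comm]
      have hv : ∀ v : Fin n, ∑ G : SimpleGraph (Fin n), gnpWeight n p G *
        ((if G.degree u ≤ k then 1 else 0) * (if G.degree v ≤ k then 1 else 0)) ≤
          (if v = u then r else 0) + q ^ 2 := by
        intro v
        split_ifs with h
        · subst h
          have := pr_deg n k p v
          have e2 : ∑ G : SimpleGraph (Fin n), gnpWeight n p G *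
            ((if G.degree v ≤ k then 1 else 0) * (if G.degree v ≤ k then 1 else 0)) = r := by
            refine Eq.trans ?_ this
            exact Finset.sum_congr rfl fun G _ => by split_ifs <;> simp
          rw [e2]
          nlinarith [sq_nonneg q]
        · have := pr_deg2 n k p h0 h1 u v (Ne.symm h)
          linarith
      refine (Finset.sum_le_sum fun v _ => hv v).trans ?_
      rw [Finset.sum_add_distrib]
      simp
    refine (Finset.sum_le_sum fun u _ => hu u).trans ?_
    simp
    apply le_of_eq; ring
  have hvar : ∑ G, gnpWeight n p G * (X G - n * r) ^ 2 ≤ n * r + n ^ 2 * q ^ 2 - (n * r) ^ 2 := by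
    have e : ∑ G, gnpWeight n p G * (X G - n * r) ^ 2 = ∑ G, gnpWeight n p G * (X G) ^ 2
        - 2 * (n * r) * ∑ G, gnpWeight n p G * X G + (n * r) ^ 2 * ∑ G, gnpWeight n p G := by
      rw [Finset.mul_sum, Finset.mul_sum, ← Finset.sum_sub_distrib, ← Finset.sum_add_distrib]
      exact Finset.sum_congr rfl fun G _ => by ring
    rw [e, hEX, weight_sum]
    linarith
  refine le_trans ?_ hvar
  rw [← weight_sum n p]
  unfold gnpProb
  rw [← Finset.sum_sub_distrib, Finset.sum_mul]
  refine Finset.sum_le_sum fun G _ => ?_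
  have hw := weight_nonneg n p h0 h1 G
  split_ifs with h
  · rw [sub_self, zero_mul]; positivity
  · have : X G = 0 := by
      rw [hX]
      refine Finset.sum_eq_zero fun v _ => ?_
      rw [if_neg]
      exact fun hk => h (hA G v hk)
    rw [this]; apply le_of_eq; ring
lemma fact_bound (k : ℕ) (hk : 1 ≤ k) :
    (k.factorial : ℝ) * Real.exp k ≤ Real.exp 1 * k ^ (k + 1) := by
  induction k, hk using Nat.le_induction with
  | base => simp
  | succ k hk ih =>
    have hk0 : (0 : ℝ) < k := by exact_mod_cast hk
    have h1 : Real.exp 1 * (k : ℝ) ^ (k + 1) ≤ ((k : ℝ) + 1) ^ (k + 1) := by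
      have hl : Real.exp (1 / ((k : ℝ) + 1)) ≤ ((k : ℝ) + 1) / k := by
        rw [← Real.le_log_iff_exp_le (by positivity)]
        have := Real.one_sub_inv_le_log_of_pos (x := ((k : ℝ) + 1) / k) (by positivity)
        refine le_trans (le_of_eq ?_) this
        field_simp
        ring
      have h2 := pow_le_pow_left₀ (Real.exp_pos _).le hl (k + 1)
      rw [← Real.exp_nat_mul, div_pow, le_div_iff₀ (by positivity)] at h2
      have : ((k + 1 : ℕ) : ℝ) * (1 / ((k : ℝ) + 1)) = 1 := by push_cast; field_simp
      rwa [this] at h2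
    rw [Nat.factorial_succ]
    push_cast
    rw [Real.exp_add]
    calc ((k : ℝ) + 1) * k.factorial * (Real.exp k * Real.exp 1)
        = ((k : ℝ) + 1) * Real.exp 1 * (k.factorial * Real.exp k) := by ring
      _ ≤ ((k : ℝ) + 1) * Real.exp 1 * (Real.exp 1 * k ^ (k + 1)) := by gcongr
      _ ≤ ((k : ℝ) + 1) * Real.exp 1 * ((k : ℝ) + 1) ^ (k + 1) := by gcongr
      _ = _ := by ring

lemma e306 : Real.exp (5.5 : ℝ) ≤ 306 := by
  have h := Real.exp_one_lt_d9
  have h1 : Real.exp (5.5 : ℝ) ^ 2 = Real.exp 1 ^ 11 := by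
    rw [← Real.exp_nat_mul, ← Real.exp_nat_mul]; norm_num
  have h2 : Real.exp 1 ^ 11 ≤ (2.7182818286 : ℝ) ^ 11 := by gcongr
  refine abs_le_of_sq_le_sq' ?_ (by norm_num) |>.2
  rw [h1]
  refine h2.trans (by norm_num)

lemma pois_bound (l : ℝ) (k : ℕ) (h1 : (k : ℝ) ≤ l / 306) :
    Real.exp (6.5 * k) / (Real.exp 1 * (k + 1)) ≤ l ^ k / k.factorial := by
  rcases Nat.eq_zero_or_pos k with rfl | hk
  · simp
    rw [inv_le_one₀ (Real.exp_pos _)]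
    simp
  have hk0 : (0 : ℝ) < k := by exact_mod_cast hk
  have hf := fact_bound k hk
  have hfp : (0 : ℝ) < k.factorial := by exact_mod_cast Nat.factorial_pos k
  rw [div_le_div_iff₀ (by positivity) hfp]
  have e : Real.exp (6.5 * k) = Real.exp k * Real.exp 5.5 ^ k := by
    rw [← Real.exp_nat_mul, ← Real.exp_add]; congr 1; ring
  have hl : Real.exp 5.5 * k ≤ l := by
    have := e306
    nlinarith
  calc Real.exp (6.5 * k) * k.factorial = Real.exp 5.5 ^ k * (k.factorial * Real.exp k) := by
        rw [e]; ring
    _ ≤ Real.exp 5.5 ^ k * (Real.exp 1 * k ^ (k + 1)) := by gcongr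
    _ = (Real.exp 5.5 * k) ^ k * (Real.exp 1 * k) := by ring
    _ ≤ l ^ k * (Real.exp 1 * (k + 1)) := by
        have : (Real.exp 5.5 * k) ^ k ≤ l ^ k := by gcongr
        have h3 : (0 : ℝ) ≤ l ^ k := le_trans (by positivity) this
        refine mul_le_mul this (by nlinarith [Real.exp_pos 1]) (by positivity) h3

lemma tail_bound (n k : ℕ) (p L : ℝ) (hn : 2 ≤ n) (hL : 0 ≤ L) (h0 : 0 ≤ p) (hp : p ≤ 1 / 2)
    (hk : k = ⌊n * p / 306⌋₊) (hl : n * p ≤ 1.02 * L) (hpp : n * p * p ≤ 1 / 2)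
    (hLn : 2 * (L * (L + 1)) ≤ n) (hLn2 : L + 2 ≤ n) :
    Real.exp (-9.5) / 2 * Real.exp (-L + L / 600) / (L + 1) ≤ bTail p (n - 2) k := by
  have hn0 : (0 : ℝ) < n := by positivity
  have k1 : (k : ℝ) ≤ n * p / 306 := by rw [hk]; exact Nat.floor_le (by positivity)
  have k2 : n * p / 306 - 1 ≤ (k : ℝ) := by
    rw [hk]; have := Nat.lt_floor_add_one (n * p / 306); linarith
  have kL : (k : ℝ) ≤ L := by linarith
  have kn : k + 2 ≤ n := by
    have : (k : ℝ) + 2 ≤ n := by linarith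
    exact_mod_cast this
  refine le_trans ?_ (bTail_ge p h0 (by linarith) (n - 2) k (by omega))
  have hfp : (0 : ℝ) < k.factorial := by exact_mod_cast Nat.factorial_pos k
  -- (1-p) power
  have hq : Real.exp (-(n * p) - 1) ≤ (1 - p) ^ (n - 2 - k) := by
    have q0 : 0 < 1 - p := by linarith
    have a1 : (1 - p) ^ n ≤ (1 - p) ^ (n - 2 - k) :=
      pow_le_pow_of_le_one q0.le (by linarith) (by omega)
    refine le_trans ?_ a1
    have a2 : Real.exp (-p - 2 * p * p) ≤ 1 - p := by
      rw [← Real.le_log_iff_exp_le q0]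
      have := Real.one_sub_inv_le_log_of_pos q0
      refine le_trans ?_ this
      rw [← sub_nonneg]
      have : 1 - (1 - p)⁻¹ - (-p - 2 * p * p) = p * p * (1 - 2 * p) / (1 - p) := by
        field_simp; ring
      rw [this]
      have : 0 ≤ 1 - 2 * p := by linarith
      positivity
    have a3 := pow_le_pow_left₀ (Real.exp_pos _).le a2 n
    refine le_trans ?_ a3
    rw [← Real.exp_nat_mul, Real.exp_le_exp]
    nlinarith
  have hc : (n * p) ^ k / k.factorial / 2 ≤ ((n - 2).choose k : ℝ) * p ^ k := by
    have d1 := Nat.pow_sub_le_descFactorial (n - 2) k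
    rw [Nat.descFactorial_eq_factorial_mul_choose] at d1
    have d2 : ((n : ℝ) - 1 - k) ^ k ≤ k.factorial * ((n - 2).choose k : ℝ) := by
      have : ((n - 2 + 1 - k : ℕ) : ℝ) = (n : ℝ) - 1 - k := by
        have : n - 2 + 1 - k = n - (1 + k) := by omega
        rw [this, Nat.cast_sub (by omega)]; push_cast; ring
      rw [← this]
      exact_mod_cast d1
    have hge : (-2 : ℝ) ≤ -((k + 1) / n) := by
      rw [neg_le_neg_iff, div_le_iff₀ hn0]
      linarith
    have d3 := one_add_mul_le_pow hge k
    have d4 : (1 : ℝ) / 2 ≤ 1 + (k : ℝ) * -((k + 1) / n) := by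
      have : (k : ℝ) * ((k + 1) / n) ≤ 1 / 2 := by
        rw [← mul_div_assoc, div_le_iff₀ hn0]
        have : (k : ℝ) * (k + 1) ≤ L * (L + 1) := by gcongr
        linarith
      linarith
    have d5 : (n : ℝ) ^ k / 2 ≤ ((n : ℝ) - 1 - k) ^ k := by
      have : ((n : ℝ) - 1 - k) = n * (1 + -((k + 1) / n)) := by field_simp; ring
      rw [this, mul_pow, div_eq_mul_one_div]
      have := d4.trans d3
      gcongr
    rw [div_div, div_le_iff₀ (by positivity), mul_pow]
    have : 0 ≤ p ^ k := by positivity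
    nlinarith [mul_le_mul_of_nonneg_right (d5.trans d2) this]
  have hP := pois_bound (n * p) k k1
  have : 0 < L + 1 := by linarith
  calc Real.exp (-9.5) / 2 * Real.exp (-L + L / 600) / (L + 1)
      = Real.exp (-9.5 + (-L + L / 600)) / (L + 1) / 2 := by rw [Real.exp_add (-9.5)]; ring
    _ ≤ Real.exp (6.5 * k - 1 + (-(n * p) - 1)) / (k + 1) / 2 := by
        have : -9.5 + (-L + L / 600) ≤ 6.5 * k - 1 + (-(n * p) - 1) := by linarith
        have := Real.exp_le_exp.2 this
        gcongr ?_ / ?_ / 2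
        linarith
    _ = (Real.exp (6.5 * k) / (Real.exp 1 * (k + 1))) / 2 * Real.exp (-(n * p) - 1) := by
        rw [Real.exp_add, Real.exp_sub]; field_simp
    _ ≤ ((n * p) ^ k / k.factorial) / 2 * Real.exp (-(n * p) - 1) := by gcongr
    _ ≤ (((n - 2).choose k : ℝ) * p ^ k) * (1 - p) ^ (n - 2 - k) := by gcongr
    _ = _ := by ring

open Topology in
lemma whp_core (p : ℕ → ℝ) (hp0 : ∀ n, 0 ≤ p n)
    (hhigh : ∀ n : ℕ, p n ≤ 1.02 * Real.log n / n)
    (A : ∀ n : ℕ, SimpleGraph (Fin n) → Prop)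
    (hA : ∀ n, 0 < n → ∀ G v, G.degree v ≤ ⌊n * p n / 306⌋₊ → A n G) : WHP p A := by
  have tL : Tendsto (fun n : ℕ => Real.log n) atTop atTop :=
    Real.tendsto_log_atTop.comp tendsto_natCast_atTop_atTop
  have t1 : Tendsto (fun n : ℕ => Real.log n / n) atTop (𝓝 0) := by
    have := (Real.tendsto_pow_log_div_mul_add_atTop 1 0 1 one_ne_zero).comp
      (tendsto_natCast_atTop_atTop (R := ℝ))
    simpa [Function.comp_def] using this
  have t2 : Tendsto (fun n : ℕ => Real.log n ^ 2 / n) atTop (𝓝 0) := by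
    have := (Real.tendsto_pow_log_div_mul_add_atTop 1 0 2 one_ne_zero).comp
      (tendsto_natCast_atTop_atTop (R := ℝ))
    simpa [Function.comp_def] using this
  have tp : Tendsto p atTop (𝓝 0) := by
    refine squeeze_zero hp0 hhigh ?_
    have := t1.const_mul 1.02
    simpa [mul_div_assoc] using this
  have tE : Tendsto (fun n : ℕ => (Real.log n + 1) * Real.exp (-(Real.log n / 600))) atTop (𝓝 0) := by
    have a1 := (Real.tendsto_pow_mul_exp_neg_atTop_nhds_zero 1)
    have a0 := (Real.tendsto_pow_mul_exp_neg_atTop_nhds_zero 0)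
    have tL' : Tendsto (fun n : ℕ => Real.log n / 600) atTop atTop :=
      tL.atTop_div_const (by norm_num)
    have := ((a1.comp tL').const_mul 600).add (a0.comp tL')
    simp only [mul_zero, add_zero] at this
    refine this.congr fun n => ?_
    simp only [Function.comp]
    ring
  set C : ℝ := 4 / Real.exp (-9.5) with hC
  have terr : Tendsto (fun n : ℕ => 1 - (C * ((Real.log n + 1) * Real.exp (-(Real.log n / 600)))
      + (((1 - p n) ^ 2)⁻¹ - 1))) atTop (𝓝 1) := by
    have b : Tendsto (fun n => (((1 - p n) ^ 2)⁻¹ - 1)) atTop (𝓝 0) := by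
      have := (((tp.const_sub 1).pow 2).inv₀ (by norm_num)).sub_const 1
      simpa using this
    have := ((tE.const_mul C).add b).const_sub 1
    simpa using this
  have ev1 : ∀ᶠ n : ℕ in atTop, p n ≤ 1 / 2 := tp.eventually_le_const (by norm_num)
  have ev2 : ∀ᶠ n : ℕ in atTop, Real.log n / n ≤ 1 / 8 := t1.eventually_le_const (by norm_num)
  have ev3 : ∀ᶠ n : ℕ in atTop, Real.log n ^ 2 / n ≤ 1 / 8 := t2.eventually_le_const (by norm_num)
  refine tendsto_of_tendsto_of_tendsto_of_le_of_le' terr tendsto_const_nhds ?_ ?_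
  · filter_upwards [ev1, ev2, ev3, eventually_ge_atTop 4] with n h1 h2 h3 h4
    have hn0 : (0 : ℝ) < n := by positivity
    have hn4 : (4 : ℝ) ≤ n := by exact_mod_cast h4
    set L := Real.log n with hL
    have L0 : 0 ≤ L := Real.log_natCast_nonneg n
    have hnp : n * p n ≤ 1.02 * L := by
      have := hhigh n
      rw [le_div_iff₀ hn0] at this
      linarith
    rw [div_le_iff₀ hn0] at h2 h3
    have hp := hp0 n
    have tb := tail_bound n ⌊n * p n / 306⌋₊ (p n) L (by omega) L0 hp h1 rfl hnp ?_ (by nlinarith)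
      (by linarith)
    swap
    · have : n * (n * p n * p n) ≤ n * (1 / 2) := by
        have : (n * p n) * (n * p n) ≤ (1.02 * L) * (1.02 * L) := by gcongr
        nlinarith
      exact le_of_mul_le_mul_left this hn0
    set k := ⌊n * p n / 306⌋₊ with hk
    have sm := second_moment n k (p n) hp (by linarith) (A n) (fun G v h => hA n (by omega) G v h)
    have bs := bTail_succ (p n) hp (by linarith) (n - 2) k
    rw [show n - 2 + 1 = n - 1 by omega] at bs
    set r := bTail (p n) (n - 1) k
    set q := bTail (p n) (n - 2) k
    have q0 : 0 < q := lt_of_lt_of_le (by positivity) tb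
    have s0 : 0 < 1 - p n := by linarith
    have r0 : 0 < r := lt_of_lt_of_le (by positivity) bs
    -- n r lower bound
    have hnr : (C * ((L + 1) * Real.exp (-(L / 600))))⁻¹ ≤ n * r := by
      have e : (C * ((L + 1) * Real.exp (-(L / 600))))⁻¹ =
          n * (1 / 2 * (Real.exp (-9.5) / 2 * Real.exp (-L + L / 600) / (L + 1))) := by
        rw [hC, Real.exp_add, Real.exp_neg L, Real.exp_log hn0, Real.exp_neg (L / 600)]
        field_simp
        norm_num
      rw [e]
      have : 1 / 2 * q ≤ r := le_trans (by nlinarith) bs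
      have : 1 / 2 * (Real.exp (-9.5) / 2 * Real.exp (-L + L / 600) / (L + 1)) ≤ r :=
        le_trans (by linarith) this
      gcongr
    have hC0 : 0 < C := by positivity
    have hinv : (n * r)⁻¹ ≤ C * ((L + 1) * Real.exp (-(L / 600))) :=
      inv_le_of_inv_le₀ (by positivity) hnr
    have hqr : q ^ 2 / r ^ 2 ≤ ((1 - p n) ^ 2)⁻¹ := by
      rw [inv_eq_one_div, div_le_div_iff₀ (by positivity) (by positivity)]
      have : ((1 - p n) * q) ^ 2 ≤ r ^ 2 := by gcongr
      nlinarith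
    have : 1 - gnpProb n (p n) (A n) ≤ (n * r)⁻¹ + (q ^ 2 / r ^ 2 - 1) := by
      have pos : 0 < (n * r) ^ 2 := by positivity
      rw [← le_div_iff₀ pos] at sm
      refine sm.trans (le_of_eq ?_)
      field_simp
      ring
    linarith
  · filter_upwards [ev1] with n h1
    exact prob_le_one n _ (hp0 n) (by linarith) _

/-- (From the proof of Theorem 2): for `p ≤ 1.02 ln n / n`, w.h.p. `δ(G) ≤ ln n / 300`;
consequently, w.h.p. `δ(G) - 2 ≤ (np/100)(1/3 - ε)` for some fixed `ε > 0`. -/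
theorem stmt17 (p : ℕ → ℝ) (hp0 : ∀ n, 0 ≤ p n)
    (hhigh : ∀ n : ℕ, p n ≤ 1.02 * Real.log n / n) :
    WHP p (fun n G => ∀ hn : 0 < n,
      haveI : Nonempty (Fin n) := ⟨⟨0, hn⟩⟩
      (G.minDegree : ℝ) ≤ Real.log n / 300) ∧
    ∃ ε : ℝ, 0 < ε ∧ WHP p (fun n G => ∀ hn : 0 < n,
      haveI : Nonempty (Fin n) := ⟨⟨0, hn⟩⟩
      (G.minDegree : ℝ) - 2 ≤ ((n : ℝ) * p n / 100) * (1 / 3 - ε)) := by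
  have key : ∀ n, 0 < n → ∀ (G : SimpleGraph (Fin n)) v, G.degree v ≤ ⌊n * p n / 306⌋₊ →
      (G.minDegree : ℝ) ≤ n * p n / 306 := by
    intro n hn G v h
    have h1 : ((G.degree v : ℕ) : ℝ) ≤ n * p n / 306 := by
      have := Nat.floor_le (a := n * p n / 306) (by have := hp0 n; positivity)
      exact le_trans (by exact_mod_cast h) this
    refine le_trans ?_ h1
    exact_mod_cast G.minDegree_le_degree v
  refine ⟨whp_core p hp0 hhigh _ ?_, 1 / 153, by norm_num, whp_core p hp0 hhigh _ ?_⟩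
  · intro n hn G v h _
    have h1 := key n hn G v h
    have hn0 : (0 : ℝ) < n := by exact_mod_cast hn
    have := hhigh n
    rw [le_div_iff₀ hn0] at this
    refine h1.trans ?_
    linarith
  · intro n hn G v h _
    have h1 := key n hn G v h
    have : (n : ℝ) * p n / 100 * (1 / 3 - 1 / 153) = n * p n / 306 := by ring
    rw [this]
    linarith
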